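/- Let V be a finite linearly ordered set, σ a permutation of V, and for α ≥ 1 let j_α be the number of orbits of ⟨σ⟩ on V of cardinality α. Let W be the free ℚ-vector space with basis the 2-element subsets {x,y} of V, and let A_σ : W → W send the basis vector indexed by {x,y} with x < y to +e_{{σx,σy}} if σx < σy and to −e_{{σx,σy}} if σx > σy. Then, as polynomials in t: det(1 − t·A_σ) = sgn(σ) · Π_{α≥1} (1 − t^{2α−1})^{(α−1)·j_{2α−1}} · Π_{α≥1} [−(1 + t^α)·(1 − t^{2α})^{α−1}]^{j_{2α}} · Π_{α≥1} (1 − t^α)^{α·j_α(j_α−1)/2} · Π_{β>α≥1} (1 − t^{lcm(α,β)})^{gcd(α,β)·j_α·j_β}. (Equivalently, the total character ξ^{−+−}_{j,0} of the graph space with oriented edges which are odd under orientation reversal, multiple edges allowed, and odd symmetry under vertex permutations, equals sgn(σ)/det(1 − t·A_σ).) -/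

import Mathlib

/-!
Up to transposition `A_σ` is the second exterior power of the permutation matrix `P` of `σ`. Over a
torsion-free ring `det (1 - t A)` is determined by the traces of the powers `A ^ k`, `k ≥ 1`: they
are the power sums of the reciprocal roots. For `P` these traces count the fixed points of `σ ^ k`,
which gives `det (1 - t P) = ∏ (1 - t ^ n) ^ j n`. Since `2 tr (Λ² P ^ k) = (tr P ^ k) ^ 2 -
tr (P ^ (2 k))`, the reciprocal roots of `det (1 - t A_σ)` have the power sums of the claimed
product, where two cycles of lengths `α`, `β` contribute `gcd (α, β)` orbits of length
`lcm (α, β)`. The sign of `σ` comes from the leading coefficient of `det (1 - t P)`.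
-/

open Polynomial

/-- The matrix (in the basis indexed by pairs `x < y`) of the signed permutation
endomorphism `A_σ` sending the basis vector `e_{x,y}` (for `x < y`) to `e_{σx,σy}` if
`σx < σy` and to `-e_{σy,σx}` if `σx > σy`. -/
def pairMatrix {V : Type*} [LinearOrder V] (σ : Equiv.Perm V) :
    Matrix {p : V × V // p.1 < p.2} {p : V × V // p.1 < p.2} ℚ :=
  fun q p =>
    if (q : V × V) = (σ p.1.1, σ p.1.2) then 1
    else if (q : V × V) = (σ p.1.2, σ p.1.1) then -1 else 0

section PowerSums

open scoped PowerSeries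

variable {R ι : Type*} [CommRing R] {f g : R[X]} {p q : ℕ → R}

/-- `f` has constant coefficient `1` and power sums `p 1, p 2, …`: if `f = ∏ (1 - a X)` then
`p k = ∑ a ^ k`. This is encoded by Newton's identity `f' = -f · ∑ p (k + 1) X ^ k`, so that the
value `p 0` is irrelevant. -/
def HasPowerSums (f : R[X]) (p : ℕ → R) : Prop :=
  f.coeff 0 = 1 ∧
    (derivative f : R⟦X⟧) = -((f : R⟦X⟧) * PowerSeries.mk fun k => p (k + 1))

namespace HasPowerSums

lemma one : HasPowerSums (1 : R[X]) 0 := by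
  refine ⟨coeff_one_zero, ?_⟩
  ext k
  simp

lemma mul (hf : HasPowerSums f p) (hg : HasPowerSums g q) : HasPowerSums (f * g) (p + q) := by
  refine ⟨by rw [mul_coeff_zero, hf.1, hg.1, one_mul], ?_⟩
  have hmk : (PowerSeries.mk fun k => (p + q) (k + 1)) =
      (PowerSeries.mk fun k => p (k + 1)) + PowerSeries.mk fun k => q (k + 1) := rfl
  rw [derivative_mul, coe_add, coe_mul, coe_mul, coe_mul, hf.2, hg.2, hmk]
  ring

lemma pow (hf : HasPowerSums f p) (n : ℕ) : HasPowerSums (f ^ n) (n • p) := by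
  induction n with
  | zero => simpa only [pow_zero, zero_smul] using one
  | succ n ih => simpa only [pow_succ, succ_nsmul] using ih.mul hf

lemma prod {s : Finset ι} {f : ι → R[X]} {p : ι → ℕ → R}
    (h : ∀ i ∈ s, HasPowerSums (f i) (p i)) : HasPowerSums (∏ i ∈ s, f i) (∑ i ∈ s, p i) := by
  classical
  induction s using Finset.induction_on with
  | empty => exact one
  | insert i s hi ih =>
    rw [Finset.prod_insert hi, Finset.sum_insert hi]
    exact (h i (Finset.mem_insert_self i s)).mul
      (ih fun k hk => h k (Finset.mem_insert_of_mem hk))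

lemma isUnit_coe (hf : HasPowerSums f p) : IsUnit (f : R⟦X⟧) := by
  rw [PowerSeries.isUnit_iff_constantCoeff, constantCoeff_coe, hf.1]
  exact isUnit_one

lemma of_mul_left (hf : HasPowerSums f p) (hfg : HasPowerSums (f * g) (p + q)) :
    HasPowerSums g q := by
  refine ⟨by simpa only [mul_coeff_zero, hf.1, one_mul] using hfg.1,
    hf.isUnit_coe.mul_left_cancel ?_⟩
  have hmk : (PowerSeries.mk fun k => (p + q) (k + 1)) =
      (PowerSeries.mk fun k => p (k + 1)) + PowerSeries.mk fun k => q (k + 1) := rfl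
  have hder := hfg.2
  rw [derivative_mul, coe_add, coe_mul, coe_mul, coe_mul, hf.2, hmk] at hder
  linear_combination hder

lemma powerSums_unique (hp : HasPowerSums f p) (hq : HasPowerSums f q) (k : ℕ) :
    p (k + 1) = q (k + 1) := by
  have hmk := hp.isUnit_coe.mul_left_cancel (neg_injective (hp.2.symm.trans hq.2))
  simpa only [PowerSeries.coeff_mk] using congrArg (PowerSeries.coeff k) hmk

lemma congr (hf : HasPowerSums f p) (hpq : ∀ k, p (k + 1) = q (k + 1)) : HasPowerSums f q :=
  ⟨hf.1, by simpa only [hpq] using hf.2⟩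

lemma unique [IsAddTorsionFree R] (hf : HasPowerSums f p) (hg : HasPowerSums g p) : f = g := by
  obtain ⟨u, hu⟩ := hg.isUnit_coe.exists_right_inv
  -- `f * u = f / g` has derivative `0` and constant coefficient `1`.
  suffices h : (f : R⟦X⟧) * u = 1 by
    rw [← coe_inj]
    linear_combination (g : R⟦X⟧) * h - (f : R⟦X⟧) * hu
  apply PowerSeries.derivative.ext
  · have hDu := PowerSeries.derivative_coe g ▸
      (PowerSeries.derivative R).leibniz_of_mul_eq_one ((mul_comm u g).trans hu)
    rw [Derivation.leibniz, PowerSeries.derivative_coe, hDu, hf.2, hg.2, PowerSeries.derivative_one]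
    simp only [smul_eq_mul]
    linear_combination (f * u * PowerSeries.mk fun k => p (k + 1)) * hu
  · have hu₀ := congrArg PowerSeries.constantCoeff hu
    simpa only [map_mul, map_one, constantCoeff_coe, hf.1, hg.1] using hu₀

end HasPowerSums

/-- The power sums of `1 - X ^ n`, that is, the sums of the `k`-th powers of the `n`-th roots of
unity. -/
def rootsOfUnityPowerSum (R : Type*) [CommRing R] (n k : ℕ) : R := if n ∣ k then (n : R) else 0

lemma hasPowerSums_one_sub_X_pow {n : ℕ} (hn : 0 < n) :
    HasPowerSums (1 - X ^ n : R[X]) (rootsOfUnityPowerSum R n) := by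
  refine ⟨by simp [hn.ne], ?_⟩
  ext k
  rw [coeff_coe, coeff_derivative, coe_sub, coe_one, coe_pow, coe_X, sub_mul, one_mul, map_neg,
    map_sub, PowerSeries.coeff_X_pow_mul']
  simp only [coeff_sub, coeff_one, coeff_X_pow, rootsOfUnityPowerSum, PowerSeries.coeff_mk]
  rcases lt_or_ge k n with hk | hk
  · have hdvd : n ∣ k + 1 ↔ k + 1 = n :=
      ⟨fun h => le_antisymm hk (Nat.le_of_dvd k.succ_pos h), fun h => h ▸ dvd_rfl⟩
    rcases eq_or_ne (k + 1) n with rfl | hkn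
    · simp
    · simp [hdvd, hkn, hk.not_ge]
  · have hdvd : n ∣ k - n + 1 ↔ n ∣ k + 1 := by
      rw [← Nat.dvd_add_left (dvd_refl n), show k - n + 1 + n = k + 1 by omega]
    simp [hdvd, hk, show k + 1 ≠ n by omega]

lemma hasPowerSums_one_add_X_pow {n : ℕ} (hn : 0 < n) :
    HasPowerSums (1 + X ^ n : R[X])
      (rootsOfUnityPowerSum R (2 * n) - rootsOfUnityPowerSum R n) := by
  refine (hasPowerSums_one_sub_X_pow hn).of_mul_left ?_
  rw [add_sub_cancel, show (1 - X ^ n) * (1 + X ^ n) = (1 - X ^ (2 * n) : R[X]) by ring]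
  exact hasPowerSums_one_sub_X_pow (by omega)

lemma rootsOfUnityPowerSum_mul (a b k : ℕ) :
    rootsOfUnityPowerSum R a k * rootsOfUnityPowerSum R b k =
      a.gcd b * rootsOfUnityPowerSum R (a.lcm b) k := by
  have hgl : (a * b : R) = a.gcd b * a.lcm b := mod_cast congrArg _ (a.gcd_mul_lcm b).symm
  simp only [rootsOfUnityPowerSum, Nat.lcm_dvd_iff, ite_and]
  split_ifs <;> simp [hgl]

lemma rootsOfUnityPowerSum_two_mul_of_odd {n : ℕ} (hn : Odd n) (k : ℕ) :
    rootsOfUnityPowerSum R n (2 * k) = rootsOfUnityPowerSum R n k := by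
  simp only [rootsOfUnityPowerSum, (Nat.coprime_two_right.2 hn).dvd_mul_left]

lemma rootsOfUnityPowerSum_two_mul_two_mul (n k : ℕ) :
    rootsOfUnityPowerSum R (2 * n) (2 * k) = 2 * rootsOfUnityPowerSum R n k := by
  simp [rootsOfUnityPowerSum, Nat.mul_dvd_mul_iff_left]

end PowerSums

section Charpoly

open Matrix
open scoped PowerSeries

variable {n R : Type*} [Fintype n] [DecidableEq n] [CommRing R]

lemma derivative_det_eq_trace_adjugate_mul (M : Matrix n n R[X]) :
    derivative M.det = (M.adjugate * M.map derivative).trace := by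
  have hdiag (i : n) : (M.adjugate * M.map derivative) i i =
      (M.updateCol i fun r => derivative (M r i)).det := by
    rw [← cramer_apply, cramer_eq_adjugate_mulVec]
    rfl
  simp only [trace, diag_apply, hdiag, det_apply, derivative_sum, derivative_smul]
  rw [Finset.sum_comm]
  refine Finset.sum_congr rfl fun τ _ => ?_
  rw [derivative_prod_finset, Finset.smul_sum]
  refine Finset.sum_congr rfl fun i _ => ?_
  rw [← Finset.mul_prod_erase _ _ (Finset.mem_univ i), updateCol_self, mul_comm]
  congr 2
  refine Finset.prod_congr rfl fun r hr => ?_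
  rw [updateCol_ne (Finset.ne_of_mem_erase hr)]

lemma adjugate_eq_det_smul_of_mul_eq_one {A B : Matrix n n R} (h : A * B = 1) :
    A.adjugate = A.det • B := by
  rw [← mul_one A.adjugate, ← h, ← mul_assoc, adjugate_mul, smul_mul_assoc, one_mul]

/-- The power series `∑ Aᵏ Xᵏ`, as a matrix of power series. -/
def geomSeries (A : Matrix n n R) : Matrix n n R⟦X⟧ :=
  of fun i j => PowerSeries.mk fun k => (A ^ k) i j

lemma one_sub_X_smul_mul_geomSeries (A : Matrix n n R) :
    (1 - (PowerSeries.X : R⟦X⟧) • A.map PowerSeries.C) * geomSeries A = 1 := by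
  rw [sub_mul, one_mul, smul_mul_assoc]
  ext i j k
  rcases eq_or_ne i j with rfl | hij <;> cases k <;>
    simp [geomSeries, mul_apply, pow_succ', PowerSeries.coeff_succ_X_mul, PowerSeries.coeff_one, *]

lemma trace_geomSeries_mul (A : Matrix n n R) :
    (geomSeries A * A.map PowerSeries.C).trace = PowerSeries.mk fun k => (A ^ (k + 1)).trace := by
  ext k
  simp [geomSeries, trace, mul_apply, pow_succ]

lemma hasPowerSums_charpolyRev (A : Matrix n n R) :
    HasPowerSums A.charpolyRev fun k => (A ^ k).trace := by
  refine ⟨by rw [coeff_zero_eq_eval_zero, eval_charpolyRev], ?_⟩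
  let φ : R[X] →+* R⟦X⟧ := coeToPowerSeries.ringHom
  let M : Matrix n n R[X] := 1 - (X : R[X]) • A.map C
  have hφM : φ.mapMatrix M = 1 - (PowerSeries.X : R⟦X⟧) • A.map PowerSeries.C := by
    rw [map_sub, map_one]
    congr 1
    ext1 i j
    simp [φ, PowerSeries.X_mul]
  have hφM' : φ.mapMatrix (M.map derivative) = -A.map PowerSeries.C := by
    ext1 i j
    rcases eq_or_ne i j with rfl | hij
    · simp [M, φ]
    · simp [M, φ, hij]
  have hadj : φ.mapMatrix M.adjugate = φ M.det • geomSeries A := by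
    rw [RingHom.map_adjugate, RingHom.map_det, hφM]
    exact adjugate_eq_det_smul_of_mul_eq_one (one_sub_X_smul_mul_geomSeries A)
  calc φ (derivative M.det)
      = (φ.mapMatrix M.adjugate * φ.mapMatrix (M.map derivative)).trace := by
        rw [derivative_det_eq_trace_adjugate_mul, ← map_mul]
        exact AddMonoidHom.map_trace φ.toAddMonoidHom _
    _ = -(φ M.det * PowerSeries.mk fun k => (A ^ (k + 1)).trace) := by
        rw [hadj, hφM', mul_neg, trace_neg, smul_mul_assoc, trace_smul, trace_geomSeries_mul,
          smul_eq_mul]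

lemma leadingCoeff_charpolyRev (A : Matrix n n R) (hA : A.det ≠ 0) :
    A.charpolyRev.leadingCoeff = (-1) ^ Fintype.card n * A.det := by
  have hcoeff : A.charpoly.coeff 0 = (-1) ^ Fintype.card n * A.det := by
    rw [det_eq_sign_charpoly_coeff, ← mul_assoc, ← mul_pow, neg_one_mul, neg_neg, one_pow, one_mul]
  have hcoeff_ne : A.charpoly.coeff 0 ≠ 0 := fun h => hA (by
    rw [det_eq_sign_charpoly_coeff, h, mul_zero])
  rw [← reverse_charpoly, reverse_leadingCoeff, trailingCoeff_eq_coeff_zero hcoeff_ne, hcoeff]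

lemma charpolyRev_transpose (A : Matrix n n R) : Aᵀ.charpolyRev = A.charpolyRev := by
  rw [charpolyRev, charpolyRev, ← det_transpose]
  simp [transpose_map]

end Charpoly

section SecondCompound

open Matrix

lemma sum_sum_eq_sum_diag_add_sum_lt {ι M : Type*} [LinearOrder ι] [AddCommMonoid M] (s : Finset ι)
    (f : ι → ι → M) :
    ∑ i ∈ s, ∑ j ∈ s, f i j =
      ∑ i ∈ s, f i i + ∑ i ∈ s, ∑ j ∈ s with i < j, (f i j + f j i) := by
  have hsplit (i : ι) (hi : i ∈ s) : ∑ j ∈ s, f i j =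
      f i i + (∑ j ∈ s with i < j, f i j + ∑ j ∈ s with j < i, f i j) := by
    simp only [Finset.sum_filter]
    rw [← Finset.sum_add_distrib, ← Finset.sum_ite_eq_of_mem s i (f i) hi, ← Finset.sum_add_distrib]
    refine Finset.sum_congr rfl fun j _ => ?_
    rcases lt_trichotomy i j with h | rfl | h
    · simp [h, h.ne, h.not_gt]
    · simp
    · simp [h, h.ne', h.not_gt]
  have hswap : ∑ i ∈ s, ∑ j ∈ s with j < i, f i j = ∑ i ∈ s, ∑ j ∈ s with i < j, f j i :=
    Finset.sum_comm' fun i j => by simp only [Finset.mem_filter]; tauto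
  simp only [Finset.sum_congr rfl hsplit, Finset.sum_add_distrib, hswap]

variable {ι R : Type*} [LinearOrder ι] [CommRing R]

/-- The second compound matrix of `M`, that is, the matrix of its second exterior power: its entries
are the `2 × 2` minors of `M`, indexed by the pairs of rows `q` and of columns `p`. -/
def secondCompound (M : Matrix ι ι R) :
    Matrix {p : ι × ι // p.1 < p.2} {p : ι × ι // p.1 < p.2} R :=
  of fun q p => M q.1.1 p.1.1 * M q.1.2 p.1.2 - M q.1.1 p.1.2 * M q.1.2 p.1.1

lemma secondCompound_one : secondCompound (1 : Matrix ι ι R) = 1 := by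
  ext ⟨⟨i, j⟩, hij⟩ ⟨⟨k, l⟩, hkl⟩
  have hne : ¬(i = l ∧ j = k) := fun h => (hij.trans_eq h.2).not_gt (hkl.trans_eq h.1.symm)
  simp only [secondCompound, of_apply, one_apply, Subtype.mk.injEq, Prod.mk.injEq]
  grind

variable [Fintype ι]

lemma sum_subtype_fst_lt_snd {M : Type*} [AddCommMonoid M] (f : ι → ι → M) :
    ∑ p : {p : ι × ι // p.1 < p.2}, f p.1.1 p.1.2 = ∑ i, ∑ j with i < j, f i j := by
  simp only [Finset.sum_filter]
  rw [← Fintype.sum_prod_type', ← Finset.sum_filter]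
  exact (Finset.sum_subtype _ (by simp) fun p : ι × ι => f p.1 p.2).symm

lemma secondCompound_mul (M N : Matrix ι ι R) :
    secondCompound (M * N) = secondCompound M * secondCompound N := by
  ext ⟨⟨i, j⟩, _⟩ ⟨⟨a, b⟩, _⟩
  let f k l := M i k * M j l * (N k a * N l b - N k b * N l a)
  calc (M * N) i a * (M * N) j b - (M * N) i b * (M * N) j a
      = ∑ k, ∑ l, f k l := by
        simp only [mul_apply, Finset.sum_mul_sum, ← Finset.sum_sub_distrib, f]
        refine Finset.sum_congr rfl fun k _ => Finset.sum_congr rfl fun l _ => ?_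
        ring
    _ = ∑ k, ∑ l with k < l, (f k l + f l k) := by
        have hdiag (k : ι) : f k k = 0 := by simp only [f]; ring
        rw [sum_sum_eq_sum_diag_add_sum_lt]
        simp only [hdiag, Finset.sum_const_zero, zero_add]
    _ = _ := by
        rw [mul_apply, ← sum_subtype_fst_lt_snd fun k l => f k l + f l k]
        refine Finset.sum_congr rfl fun p _ => ?_
        simp only [secondCompound, of_apply, f]
        ring

lemma secondCompound_pow (M : Matrix ι ι R) (k : ℕ) :
    secondCompound (M ^ k) = secondCompound M ^ k := by
  induction k with
  | zero => rw [pow_zero, pow_zero, secondCompound_one]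
  | succ k ih => rw [pow_succ, pow_succ, secondCompound_mul, ih]

lemma two_mul_trace_secondCompound (M : Matrix ι ι R) :
    2 * (secondCompound M).trace = M.trace ^ 2 - (M ^ 2).trace := by
  let f i j := M i i * M j j - M i j * M j i
  calc 2 * (secondCompound M).trace = ∑ i, ∑ j with i < j, (f i j + f j i) := by
        rw [trace, Finset.mul_sum, ← sum_subtype_fst_lt_snd fun i j => f i j + f j i]
        refine Finset.sum_congr rfl fun p _ => ?_
        simp only [secondCompound, of_apply, diag_apply, f]
        ring
    _ = ∑ i, ∑ j, f i j := by
        have hdiag (i : ι) : f i i = 0 := sub_self _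
        rw [sum_sum_eq_sum_diag_add_sum_lt]
        simp only [hdiag, Finset.sum_const_zero, zero_add]
    _ = M.trace ^ 2 - (M ^ 2).trace := by
        simp only [f, Finset.sum_sub_distrib, sq, trace, diag_apply, mul_apply, Finset.sum_mul_sum]

end SecondCompound

section CyclePairPoly

open Matrix

variable (R : Type*) [CommRing R]

/-- The reverse characteristic polynomial of the second compound of the permutation matrix of an
`n`-cycle. -/
noncomputable def cyclePairPoly (n : ℕ) : R[X] :=
  if Odd n then (1 - X ^ n) ^ (n / 2) else (1 + X ^ (n / 2)) * (1 - X ^ n) ^ (n / 2 - 1)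

lemma exists_hasPowerSums_cyclePairPoly {n : ℕ} (hn : 0 < n) :
    ∃ p, HasPowerSums (cyclePairPoly R n) p ∧ ∀ k,
      2 * p k = n * rootsOfUnityPowerSum R n k - rootsOfUnityPowerSum R n (2 * k) := by
  rcases n.even_or_odd' with ⟨m, rfl | rfl⟩
  · have hm : 0 < m := by omega
    rw [cyclePairPoly, if_neg (by simp), Nat.mul_div_cancel_left m two_pos]
    refine ⟨_, (hasPowerSums_one_add_X_pow hm).mul ((hasPowerSums_one_sub_X_pow hn).pow (m - 1)),
      fun k => ?_⟩
    rw [rootsOfUnityPowerSum_two_mul_two_mul]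
    simp only [Pi.add_apply, Pi.sub_apply, Pi.smul_apply]
    push_cast [nsmul_eq_mul, Nat.cast_pred hm]
    ring
  · have hodd : Odd (2 * m + 1) := odd_two_mul_add_one m
    rw [cyclePairPoly, if_pos hodd, show (2 * m + 1) / 2 = m by omega]
    refine ⟨_, (hasPowerSums_one_sub_X_pow hn).pow m, fun k => ?_⟩
    rw [rootsOfUnityPowerSum_two_mul_of_odd hodd]
    simp only [Pi.smul_apply]
    push_cast [nsmul_eq_mul]
    ring

variable {R}

lemma two_mul_cast_choose_two (m : ℕ) : 2 * (m.choose 2 : R) = m ^ 2 - m := by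
  rw [← Nat.cast_two, ← Nat.cast_mul, Nat.choose_two_right,
    Nat.mul_div_cancel' m.even_mul_pred_self.two_dvd]
  cases m <;> simp [sq, mul_add, add_mul]

variable {s : Finset ℕ} {j : ℕ → ℕ}

lemma hasPowerSums_prod_one_sub_X_pow (hs : ∀ n ∈ s, 0 < n) :
    HasPowerSums (∏ n ∈ s, (1 - X ^ n : R[X]) ^ j n)
      (∑ n ∈ s, j n • rootsOfUnityPowerSum R n) :=
  .prod fun n hn => (hasPowerSums_one_sub_X_pow (hs n hn)).pow (j n)

lemma sq_sum_mul_rootsOfUnityPowerSum (k : ℕ) :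
    (∑ n ∈ s, j n * rootsOfUnityPowerSum R n k) ^ 2 =
      ∑ n ∈ s, (j n : R) ^ 2 * (n * rootsOfUnityPowerSum R n k) +
      2 * ∑ a ∈ s, ∑ b ∈ s with a < b,
        (a.gcd b * (j a * j b) : ℕ) * rootsOfUnityPowerSum R (a.lcm b) k := by
  rw [sq, Finset.sum_mul_sum, sum_sum_eq_sum_diag_add_sum_lt, Finset.mul_sum]
  congr 1
  · refine Finset.sum_congr rfl fun n _ => ?_
    rw [mul_mul_mul_comm, rootsOfUnityPowerSum_mul, Nat.gcd_self, Nat.lcm_self, sq]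
  · refine Finset.sum_congr rfl fun a _ => ?_
    rw [Finset.mul_sum]
    refine Finset.sum_congr rfl fun b _ => ?_
    push_cast
    linear_combination (2 * (j a * j b : R)) * rootsOfUnityPowerSum_mul (R := R) a b k

lemma exists_hasPowerSums_cyclePairs (hs : ∀ n ∈ s, 0 < n) :
    ∃ p, HasPowerSums
      ((∏ n ∈ s, cyclePairPoly R n ^ j n) *
        (∏ n ∈ s, (1 - X ^ n) ^ (n * (j n).choose 2)) *
        ∏ a ∈ s, ∏ b ∈ s with a < b, (1 - X ^ a.lcm b) ^ (a.gcd b * (j a * j b))) p ∧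
      ∀ k, 2 * p k = (∑ n ∈ s, j n * rootsOfUnityPowerSum R n k) ^ 2 -
        ∑ n ∈ s, j n * rootsOfUnityPowerSum R n (2 * k) := by
  choose! p hp hp₂ using fun n hn => exists_hasPowerSums_cyclePairPoly R (n := n) (hs n hn)
  have hcycle : HasPowerSums (∏ n ∈ s, cyclePairPoly R n ^ j n) (∑ n ∈ s, j n • p n) :=
    .prod fun n hn => (hp n hn).pow (j n)
  have hsame := hasPowerSums_prod_one_sub_X_pow (R := R) (j := fun n => n * (j n).choose 2) hs
  have hdiff : HasPowerSums
      (∏ a ∈ s, ∏ b ∈ s with a < b, (1 - X ^ a.lcm b : R[X]) ^ (a.gcd b * (j a * j b)))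
      (∑ a ∈ s, ∑ b ∈ s with a < b, (a.gcd b * (j a * j b)) • rootsOfUnityPowerSum R (a.lcm b)) :=
    .prod fun a ha => .prod fun b hb => (hasPowerSums_one_sub_X_pow <|
      Nat.lcm_pos (hs a ha) (hs b (Finset.mem_of_mem_filter b hb))).pow _
  refine ⟨_, (hcycle.mul hsame).mul hdiff, fun k => ?_⟩
  have hcycle₂ : 2 * ∑ n ∈ s, j n * p n k =
      ∑ n ∈ s, j n * (n * rootsOfUnityPowerSum R n k) -
        ∑ n ∈ s, j n * rootsOfUnityPowerSum R n (2 * k) := by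
    rw [Finset.mul_sum, ← Finset.sum_sub_distrib]
    refine Finset.sum_congr rfl fun n hn => ?_
    linear_combination (j n : R) * hp₂ n hn k
  have hsame₂ : 2 * ∑ n ∈ s, (n * (j n).choose 2 : ℕ) * rootsOfUnityPowerSum R n k =
      ∑ n ∈ s, (j n : R) ^ 2 * (n * rootsOfUnityPowerSum R n k) -
        ∑ n ∈ s, j n * (n * rootsOfUnityPowerSum R n k) := by
    rw [Finset.mul_sum, ← Finset.sum_sub_distrib]
    refine Finset.sum_congr rfl fun n _ => ?_
    push_cast
    linear_combination (n * rootsOfUnityPowerSum R n k) * two_mul_cast_choose_two (R := R) (j n)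
  simp only [Pi.add_apply, Finset.sum_apply, Pi.smul_apply]
  simp only [nsmul_eq_mul]
  rw [sq_sum_mul_rootsOfUnityPowerSum]
  linear_combination hcycle₂ + hsame₂

lemma trace_pow_of_charpolyRev_eq_prod {ι : Type*} [Fintype ι] [DecidableEq ι] {M : Matrix ι ι R}
    (hs : ∀ n ∈ s, 0 < n) (hM : M.charpolyRev = ∏ n ∈ s, (1 - X ^ n) ^ j n) {k : ℕ} (hk : 0 < k) :
    (M ^ k).trace = ∑ n ∈ s, j n * rootsOfUnityPowerSum R n k := by
  obtain ⟨k, rfl⟩ := Nat.exists_eq_add_one.2 hk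
  have huniq := (hM ▸ hasPowerSums_charpolyRev M).powerSums_unique
    (hasPowerSums_prod_one_sub_X_pow hs) k
  simp only [Finset.sum_apply, Pi.smul_apply] at huniq
  simpa only [nsmul_eq_mul] using huniq

lemma charpolyRev_secondCompound [IsAddTorsionFree R] {ι : Type*} [Fintype ι] [LinearOrder ι]
    {M : Matrix ι ι R} (hs : ∀ n ∈ s, 0 < n)
    (hM : M.charpolyRev = ∏ n ∈ s, (1 - X ^ n) ^ j n) :
    (secondCompound M).charpolyRev =
      (∏ n ∈ s, cyclePairPoly R n ^ j n) *
      (∏ n ∈ s, (1 - X ^ n) ^ (n * (j n).choose 2)) *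
      ∏ a ∈ s, ∏ b ∈ s with a < b, (1 - X ^ a.lcm b) ^ (a.gcd b * (j a * j b)) := by
  obtain ⟨p, hp, hp₂⟩ := exists_hasPowerSums_cyclePairs (R := R) (j := j) hs
  refine (hasPowerSums_charpolyRev _).unique (hp.congr fun k => ?_)
  apply nsmul_right_injective two_ne_zero
  simp only [nsmul_eq_mul, Nat.cast_two]
  rw [← secondCompound_pow, two_mul_trace_secondCompound, ← pow_mul, mul_comm _ 2, hp₂,
    trace_pow_of_charpolyRev_eq_prod hs hM k.add_one_pos,
    trace_pow_of_charpolyRev_eq_prod hs hM (by omega)]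

end CyclePairPoly

section Products

variable {M : Type*} [CommMonoid M] {N : ℕ} {f : ℕ → M}

lemma finprod_mem_eq_prod_of_eq_one_of_lt {s : Set ℕ} {t : Finset ℕ}
    (ht : ∀ n, n ∈ t ↔ n ∈ s ∧ n ≤ N) (hf : ∀ n, N < n → f n = 1) :
    ∏ᶠ n ∈ s, f n = ∏ n ∈ t, f n := by
  refine finprod_mem_eq_prod_of_inter_mulSupport_eq f (Set.ext fun n => ?_)
  have hn (h : f n ≠ 1) : n ≤ N := not_lt.1 (mt (hf n) h)
  simp only [Set.mem_inter_iff, Function.mem_mulSupport, Finset.mem_coe, ht]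
  tauto

lemma prod_Icc_eq_prod_odd_mul_even (hf : ∀ n, N < n → f n = 1) :
    ∏ n ∈ Finset.Icc 1 N, f n = ∏ a ∈ Finset.Icc 1 N, f (2 * a - 1) * f (2 * a) := by
  have hdouble (m : ℕ) :
      ∏ a ∈ Finset.Icc 1 m, f (2 * a - 1) * f (2 * a) = ∏ n ∈ Finset.Icc 1 (2 * m), f n := by
    induction m with
    | zero => rfl
    | succ m ih =>
      rw [Finset.prod_Icc_succ_top (by omega), ih, mul_add_one, Finset.prod_Icc_succ_top (by omega),
        Finset.prod_Icc_succ_top (by omega), mul_assoc]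
      rfl
  rw [hdouble]
  refine Finset.prod_subset (Finset.Icc_subset_Icc_right (by omega)) fun n hn hnN => hf n ?_
  simp only [Finset.mem_Icc] at hn hnN
  omega

end Products

lemma prod_cyclePairPoly_pow {R : Type*} [CommRing R] {N : ℕ} {j : ℕ → ℕ}
    (hj : ∀ n, N < n → j n = 0) :
    ∏ n ∈ Finset.Icc 1 N, cyclePairPoly R n ^ j n =
      (∏ n ∈ Finset.Icc 1 N, ((-1) ^ (n + 1)) ^ j n) *
      (∏ a ∈ Finset.Icc 1 N, (1 - X ^ (2 * a - 1)) ^ ((a - 1) * j (2 * a - 1))) *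
      ∏ a ∈ Finset.Icc 1 N, (-((1 + X ^ a) * (1 - X ^ (2 * a)) ^ (a - 1))) ^ j (2 * a) := by
  let f (n : ℕ) : R[X] := ((-1) ^ (n + 1) * cyclePairPoly R n) ^ j n
  have hf (n : ℕ) (hn : N < n) : f n = 1 := by simp only [f, hj n hn, pow_zero]
  have hodd (a : ℕ) (ha : 1 ≤ a) :
      f (2 * a - 1) = (1 - X ^ (2 * a - 1)) ^ ((a - 1) * j (2 * a - 1)) := by
    simp only [f]
    rw [cyclePairPoly, if_pos ⟨a - 1, by omega⟩, show (2 * a - 1) / 2 = a - 1 by omega,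
      Even.neg_one_pow ⟨a, by omega⟩, one_mul, pow_mul]
  have heven (a : ℕ) : f (2 * a) = (-((1 + X ^ a) * (1 - X ^ (2 * a)) ^ (a - 1))) ^ j (2 * a) := by
    simp only [f]
    rw [cyclePairPoly, if_neg (by simp), Nat.mul_div_cancel_left a two_pos,
      (odd_two_mul_add_one a).neg_one_pow, neg_one_mul]
  calc ∏ n ∈ Finset.Icc 1 N, cyclePairPoly R n ^ j n
      = (∏ n ∈ Finset.Icc 1 N, ((-1) ^ (n + 1)) ^ j n) * ∏ n ∈ Finset.Icc 1 N, f n := by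
        rw [← Finset.prod_mul_distrib]
        refine Finset.prod_congr rfl fun n _ => ?_
        rw [← mul_pow, ← mul_assoc, ← pow_add, Even.neg_one_pow ⟨n + 1, rfl⟩, one_mul]
    _ = _ := by
        rw [mul_assoc]
        congr 1
        rw [prod_Icc_eq_prod_odd_mul_even hf, ← Finset.prod_mul_distrib]
        refine Finset.prod_congr rfl fun a ha => ?_
        rw [hodd a (Finset.mem_Icc.1 ha).1, heven]

section OrbitCount

open MulAction

variable (G V : Type*) [Group G] [MulAction G V]

/-- The number of orbits of cardinality `n`. -/
noncomputable def orbitCount (n : ℕ) : ℕ :=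
  Nat.card {O : orbitRel.Quotient G V // Nat.card O.orbit = n}

variable {V}

lemma card_orbit_pos [Finite V] (x : V) : 0 < Nat.card (orbit G x) :=
  Nat.card_pos_iff.2 ⟨(nonempty_orbit x).to_subtype, inferInstance⟩

lemma card_orbit_le [Finite V] (x : V) : Nat.card (orbit G x) ≤ Nat.card V :=
  Finite.card_subtype_le _

variable (V)

lemma orbitCount_eq_zero_of_card_lt [Finite V] {n : ℕ} (hn : Nat.card V < n) :
    orbitCount G V n = 0 := by
  have : IsEmpty {O : orbitRel.Quotient G V // Nat.card O.orbit = n} := by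
    refine ⟨fun ⟨O, hO⟩ => ?_⟩
    exact (hO ▸ Finite.card_subtype_le (· ∈ O.orbit)).not_gt hn
  exact Nat.card_of_isEmpty

lemma card_subtype_card_orbit_eq [Finite V] (n : ℕ) :
    Nat.card {x : V // Nat.card (orbit G x) = n} = orbitCount G V n * n := by
  classical
  have := Fintype.ofFinite V
  have := Fintype.ofFinite (orbitRel.Quotient G V)
  have e := Equiv.sigmaSubtypeFiberEquivSubtype (Quotient.mk (orbitRel G V))
    (p := fun x => Nat.card (orbit G x) = n)
    (q := fun O : orbitRel.Quotient G V => Nat.card O.orbit = n) fun x => Iff.rfl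
  have hfiber (O : {O : orbitRel.Quotient G V // Nat.card O.orbit = n}) :
      Nat.card {x : V // Quotient.mk (orbitRel G V) x = O} = n :=
    (Nat.card_congr (Equiv.subtypeEquivRight fun _ => orbitRel.Quotient.mem_orbit.symm)).trans O.2
  rw [← Nat.card_congr e, Nat.card_sigma, Finset.sum_congr rfl fun O _ => hfiber O,
    Finset.sum_const, smul_eq_mul, Finset.card_univ, orbitCount, Nat.card_eq_fintype_card]

variable {V} {G}

lemma pow_smul_eq_iff_card_orbit_dvd (g : G) (k : ℕ) (x : V) :
    g ^ k • x = x ↔ Nat.card (orbit (Subgroup.zpowers g) x) ∣ k := by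
  rw [Nat.card_congr (orbitZPowersEquiv g x), Nat.card_zmod, pow_smul_eq_iff_minimalPeriod_dvd]

end OrbitCount

section Perm

open Matrix MulAction

variable {V : Type*} [Fintype V] (σ : Equiv.Perm V) (R : Type*) [CommRing R]

lemma ncard_fixedPoints_pow (k : ℕ) : (Function.fixedPoints (σ ^ k)).ncard =
    ∑ n ∈ Finset.Icc 1 (Fintype.card V),
      orbitCount (Subgroup.zpowers σ) V n * if n ∣ k then n else 0 := by
  have hfix : Function.fixedPoints (σ ^ k) =
      ↑({x | Nat.card (orbit (Subgroup.zpowers σ) x) ∣ k} : Finset V) := by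
    ext x
    simp only [Finset.coe_filter_univ, Set.mem_ofPred_eq, ← pow_smul_eq_iff_card_orbit_dvd]
    rfl
  rw [hfix, Set.ncard_coe_finset, Finset.card_eq_sum_card_fiberwise
    (f := fun x => Nat.card (orbit (Subgroup.zpowers σ) x))
    (t := Finset.Icc 1 (Fintype.card V)) fun x _ => Finset.mem_coe.2 <| Finset.mem_Icc.2
      ⟨card_orbit_pos _ x, Nat.card_eq_fintype_card (α := V) ▸ card_orbit_le _ x⟩]
  refine Finset.sum_congr rfl fun n _ => ?_
  rw [Finset.filter_filter]
  split_ifs with h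
  · rw [← card_subtype_card_orbit_eq, Nat.card_eq_fintype_card, Fintype.card_subtype]
    congr 1
    ext x
    rw [Finset.mem_filter_univ, Finset.mem_filter_univ, and_iff_right_of_imp fun hx => hx ▸ h]
  · rw [mul_zero, Finset.card_eq_zero, Finset.filter_eq_empty_iff]
    rintro x - ⟨hdvd, rfl⟩
    exact h hdvd

variable [DecidableEq V]

lemma permMatrix_pow (k : ℕ) : (σ ^ k).permMatrix R = σ.permMatrix R ^ k := by
  induction k with
  | zero => rw [pow_zero, pow_zero, permMatrix_one]
  | succ k ih => rw [pow_succ', permMatrix_mul, ih, pow_succ]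

lemma charpolyRev_permMatrix [IsAddTorsionFree R] : (σ.permMatrix R).charpolyRev =
    ∏ n ∈ Finset.Icc 1 (Fintype.card V), (1 - X ^ n) ^ orbitCount (Subgroup.zpowers σ) V n := by
  refine (hasPowerSums_charpolyRev _).unique <| (hasPowerSums_prod_one_sub_X_pow fun n hn =>
    (Finset.mem_Icc.1 hn).1).congr fun k => ?_
  rw [← permMatrix_pow, trace_permutation, ncard_fixedPoints_pow]
  simp only [Finset.sum_apply, Pi.smul_apply]
  simp [rootsOfUnityPowerSum]

lemma sign_eq_prod_orbitCount : (Equiv.Perm.sign σ : ℤ) = ∏ n ∈ Finset.Icc 1 (Fintype.card V),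
    ((-1) ^ (n + 1)) ^ orbitCount (Subgroup.zpowers σ) V n := by
  have hdet : (σ.permMatrix ℤ).det = Equiv.Perm.sign σ := det_permutation σ
  have hcard : Fintype.card V = ∑ n ∈ Finset.Icc 1 (Fintype.card V),
      n * orbitCount (Subgroup.zpowers σ) V n := by
    simpa [Set.ncard_univ, mul_comm] using ncard_fixedPoints_pow σ 0
  have hlead (n : ℕ) (hn : n ∈ Finset.Icc 1 (Fintype.card V)) :
      (1 - X ^ n : ℤ[X]).leadingCoeff = -1 := by
    rw [← neg_sub, leadingCoeff_neg, leadingCoeff_X_pow_sub_one (Finset.mem_Icc.1 hn).1]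
  calc (Equiv.Perm.sign σ : ℤ)
      = (-1) ^ Fintype.card V * (σ.permMatrix ℤ).charpolyRev.leadingCoeff := by
        rw [leadingCoeff_charpolyRev _ (hdet ▸ (Equiv.Perm.sign σ).ne_zero), hdet, ← mul_assoc,
          ← mul_pow, neg_one_mul, neg_neg, one_pow, one_mul]
    _ = (∏ n ∈ Finset.Icc 1 (Fintype.card V), (-1) ^ (n * orbitCount (Subgroup.zpowers σ) V n)) *
        ∏ n ∈ Finset.Icc 1 (Fintype.card V), (-1) ^ orbitCount (Subgroup.zpowers σ) V n := by
        rw [Finset.prod_pow_eq_pow_sum, ← hcard, charpolyRev_permMatrix, leadingCoeff_prod]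
        congr 1
        refine Finset.prod_congr rfl fun n hn => ?_
        rw [leadingCoeff_pow, hlead n hn]
    _ = _ := by
        rw [← Finset.prod_mul_distrib]
        refine Finset.prod_congr rfl fun n _ => ?_
        rw [pow_mul, ← mul_pow, ← pow_succ]

end Perm

section PairMatrix

variable {V : Type*} [LinearOrder V] (σ : Equiv.Perm V)

lemma pairMatrix_eq_transpose_secondCompound :
    pairMatrix σ = (secondCompound (σ.permMatrix ℚ)).transpose := by
  ext q p
  have hne : σ p.1.1 ≠ σ p.1.2 := σ.injective.ne p.2.ne
  simp only [pairMatrix, secondCompound, Matrix.transpose_apply, Matrix.of_apply,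
    Equiv.Perm.permMatrix, PEquiv.toMatrix_apply, Equiv.toPEquiv_apply, Option.mem_def,
    Option.some.injEq, Prod.ext_iff]
  grind

lemma charpolyRev_pairMatrix [Fintype V] {j : ℕ → ℕ}
    (hj : ∀ n, 1 ≤ n → j n = orbitCount (Subgroup.zpowers σ) V n) :
    (pairMatrix σ).charpolyRev =
      ((Equiv.Perm.sign σ : ℤ) : ℚ[X]) *
      (∏ a ∈ Finset.Icc 1 (Fintype.card V), (1 - X ^ (2 * a - 1)) ^ ((a - 1) * j (2 * a - 1))) *
      (∏ a ∈ Finset.Icc 1 (Fintype.card V),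
        (-((1 + X ^ a) * (1 - X ^ (2 * a)) ^ (a - 1))) ^ j (2 * a)) *
      (∏ a ∈ Finset.Icc 1 (Fintype.card V), (1 - X ^ a) ^ (a * (j a).choose 2)) *
      ∏ a ∈ Finset.Icc 1 (Fintype.card V), ∏ b ∈ Finset.Icc 1 (Fintype.card V) with a < b,
        (1 - X ^ a.lcm b) ^ (a.gcd b * (j a * j b)) := by
  have hj' (n : ℕ) (hn : n ∈ Finset.Icc 1 (Fintype.card V)) :
      orbitCount (Subgroup.zpowers σ) V n = j n := (hj n (Finset.mem_Icc.1 hn).1).symm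
  have hj₀ (n : ℕ) (hn : Fintype.card V < n) : j n = 0 :=
    (hj n (by omega)).trans <|
      orbitCount_eq_zero_of_card_lt _ V (by rwa [Nat.card_eq_fintype_card])
  have hperm : (σ.permMatrix ℚ).charpolyRev =
      ∏ n ∈ Finset.Icc 1 (Fintype.card V), (1 - X ^ n) ^ j n := by
    rw [charpolyRev_permMatrix]
    exact Finset.prod_congr rfl fun n hn => by rw [hj' n hn]
  have hsign : ((Equiv.Perm.sign σ : ℤ) : ℚ[X]) =
      ∏ n ∈ Finset.Icc 1 (Fintype.card V), ((-1) ^ (n + 1)) ^ j n := by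
    rw [sign_eq_prod_orbitCount, Int.cast_prod]
    exact Finset.prod_congr rfl fun n hn => by rw [hj' n hn]; push_cast; rfl
  rw [pairMatrix_eq_transpose_secondCompound, charpolyRev_transpose,
    charpolyRev_secondCompound (fun n hn => (Finset.mem_Icc.1 hn).1) hperm,
    prod_cyclePairPoly_pow hj₀, ← hsign]

end PairMatrix

/-- Let `V` be a finite linearly ordered set, `σ` a permutation of `V`,
and for `α ≥ 1` let `j α` be the number of orbits of `⟨σ⟩` on `V` of cardinality `α`.
Let `A_σ` be the signed permutation endomorphism of the free `ℚ`-vector space on the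
2-element subsets of `V` (encoded by pairs `x < y`) induced by `σ`, with sign `-1` exactly
when `σ` reverses the order of the pair.  Then, in `ℚ[t]`,
`det (1 - t·A_σ) = sgn(σ) · ∏_{α≥1} (1 - t^{2α-1})^((α-1)·j_{2α-1})
· ∏_{α≥1} (-(1 + t^α)·(1 - t^{2α})^{α-1})^(j_{2α})
· ∏_{α≥1} (1 - t^α)^(α·j_α(j_α-1)/2)
· ∏_{β>α≥1} (1 - t^{lcm(α,β)})^(gcd(α,β)·j_α·j_β)`. -/
theorem stmt_7 {V : Type*} [Fintype V] [LinearOrder V] (σ : Equiv.Perm V)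
    (j : ℕ → ℕ)
    (hj : ∀ α, 1 ≤ α → j α = Nat.card {O : MulAction.orbitRel.Quotient
        (Subgroup.zpowers σ) V // Nat.card O.orbit = α}) :
    (1 - (X : ℚ[X]) • ((pairMatrix σ).map C)).det =
    ((Equiv.Perm.sign σ : ℤ) : ℚ[X]) *
    (∏ᶠ α ∈ Set.Ici 1, (1 - (X : ℚ[X]) ^ (2 * α - 1)) ^ ((α - 1) * j (2 * α - 1))) *
    (∏ᶠ α ∈ Set.Ici 1,
      (-((1 + (X : ℚ[X]) ^ α) * (1 - (X : ℚ[X]) ^ (2 * α)) ^ (α - 1))) ^ (j (2 * α))) *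
    (∏ᶠ α ∈ Set.Ici 1, (1 - (X : ℚ[X]) ^ α) ^ (α * (j α * (j α - 1) / 2))) *
    (∏ᶠ α ∈ Set.Ici 1, ∏ᶠ β ∈ Set.Ioi α,
      (1 - (X : ℚ[X]) ^ Nat.lcm α β) ^ (Nat.gcd α β * (j α * j β))) := by
  have hj₀ (n : ℕ) (hn : Fintype.card V < n) : j n = 0 :=
    (hj n (by omega)).trans <|
      orbitCount_eq_zero_of_card_lt _ V (by rwa [Nat.card_eq_fintype_card])
  have hIci (f : ℕ → ℚ[X]) (hf : ∀ n, Fintype.card V < n → f n = 1) :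
      ∏ᶠ a ∈ Set.Ici 1, f a = ∏ a ∈ Finset.Icc 1 (Fintype.card V), f a :=
    finprod_mem_eq_prod_of_eq_one_of_lt (N := Fintype.card V) (fun n => by simp) hf
  have hIoi (a : ℕ) : ∏ᶠ b ∈ Set.Ioi a, (1 - (X : ℚ[X]) ^ a.lcm b) ^ (a.gcd b * (j a * j b)) =
      ∏ b ∈ Finset.Icc 1 (Fintype.card V) with a < b,
        (1 - X ^ a.lcm b) ^ (a.gcd b * (j a * j b)) :=
    finprod_mem_eq_prod_of_eq_one_of_lt (N := Fintype.card V)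
      (fun n => by simp only [Finset.mem_filter, Finset.mem_Icc, Set.mem_Ioi]; omega)
      fun n hn => by rw [hj₀ n hn, mul_zero, mul_zero, pow_zero]
  simp only [hIoi, ← Nat.choose_two_right]
  rw [hIci _ fun n hn => by rw [hj₀ _ (by omega), mul_zero, pow_zero],
    hIci _ fun n hn => by rw [hj₀ _ (by omega), pow_zero],
    hIci _ fun n hn => by rw [hj₀ n hn, Nat.choose_zero_succ, mul_zero, pow_zero],
    hIci _ fun n hn => by simp [hj₀ n hn]]
  exact charpolyRev_pairMatrix σ hj
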